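/- Let p be an odd prime, let n ≥ 2, and let K be a field of characteristic p. Let M = ZMod p^n × ZMod p^n and let σ : M → M be the group automorphism σ(i,j) = (i, i + j). Then for every s ≥ 0: (a) the K-linear endomorphism of H^s(M; K) induced (by functoriality of group cohomology with trivial coefficients) by the automorphism σ^p is the identity; and (b) the sum ∑_{i=0}^{p^n − 1} (endomorphism of H^s(M; K) induced by σ^i) is the zero K-linear map. -/

import Mathlib

noncomputable section

open CategoryTheory groupCohomology

variable (k : Type) [CommRing k] {G : Type} [Group G]

/-- Precomposition with a group homomorphism `φ : G →* G` on inhomogeneous `n`-cochains with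
trivial coefficients `k`. -/
def cochainPrecomp (φ : G →* G) (n : ℕ) :
    ((Fin n → G) → k) →ₗ[k] ((Fin n → G) → k) where
  toFun f := fun g => f fun i => φ (g i)
  map_add' _ _ := rfl
  map_smul' _ _ := rfl

@[simp] theorem cochainPrecomp_apply (φ : G →* G) (n : ℕ) (f : (Fin n → G) → k)
    (g : Fin n → G) : cochainPrecomp k φ n f g = f fun i => φ (g i) :=
  rfl

theorem comp_contractNth {n : ℕ} (φ : G →* G) (j : Fin (n + 1)) (g : Fin (n + 1) → G) :
    (fun i => φ (Fin.contractNth j (· * ·) g i)) =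
      Fin.contractNth j (· * ·) fun i => φ (g i) := by
  ext x
  rcases lt_trichotomy (x : ℕ) (j : ℕ) with h | h | h
  · rw [Fin.contractNth_apply_of_lt _ _ _ _ h, Fin.contractNth_apply_of_lt _ _ _ _ h]
  · rw [Fin.contractNth_apply_of_eq _ _ _ _ h, Fin.contractNth_apply_of_eq _ _ _ _ h, map_mul]
  · rw [Fin.contractNth_apply_of_gt _ _ _ _ h, Fin.contractNth_apply_of_gt _ _ _ _ h]

theorem cochainPrecomp_comm (φ : G →* G) (n : ℕ) :
    (inhomogeneousCochains.d (Rep.trivial k G k) n).hom.comp (cochainPrecomp k φ n) =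
      (cochainPrecomp k φ (n + 1)).comp (inhomogeneousCochains.d (Rep.trivial k G k) n).hom := by
  refine LinearMap.ext fun f => funext fun g => ?_
  refine congrArg (fun z : k => f (fun i => φ (g i.succ)) + z) ?_
  exact Finset.sum_congr rfl fun j _ =>
    congrArg (fun z => ((-1 : k) ^ ((j : ℕ) + 1) • z : k))
      (congrArg f (comp_contractNth φ j g))

/-- The chain map on inhomogeneous cochains (with trivial coefficients `k`) induced by
precomposition with a group homomorphism `φ : G →* G`. -/
def cochainsMap (φ : G →* G) :
    inhomogeneousCochains (Rep.trivial k G k) ⟶ inhomogeneousCochains (Rep.trivial k G k) where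
  f n := ModuleCat.ofHom (cochainPrecomp k φ n)
  comm' i j hij := by
    obtain rfl : i + 1 = j := hij
    have h1 : (inhomogeneousCochains (Rep.trivial k G k)).d i (i + 1) =
        inhomogeneousCochains.d (Rep.trivial k G k) i :=
      inhomogeneousCochains.d_def (Rep.trivial k G k) i
    rw [h1]
    exact ModuleCat.hom_ext (cochainPrecomp_comm k φ i)

/-- The `k`-linear endomorphism of `H^s(G; k)` (group cohomology with trivial coefficients)
induced, by functoriality, by a group homomorphism `φ : G →* G`. -/
def cohomologyInducedMap (φ : G →* G) (s : ℕ) :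
    groupCohomology (Rep.trivial k G k) s ⟶ groupCohomology (Rep.trivial k G k) s :=
  HomologicalComplex.homologyMap (cochainsMap k φ) s

/-- The group automorphism `σ(i,j) = (i, i+j)` of `M = ZMod q × ZMod q`, as a monoid
endomorphism of the multiplicative version of `M`. -/
def sigmaM (q : ℕ) : Monoid.End (Multiplicative (ZMod q × ZMod q)) :=
  AddMonoidHom.toMultiplicative
    { toFun := fun x => (x.1, x.1 + x.2)
      map_zero' := by simp
      map_add' := fun x y => by simp [Prod.ext_iff]; ring }

/-!
Write `M` multiplicatively with generators `g = (1, 0)` and `h = (0, 1)`, so that `σ ^ p` maps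
`g` to `g h ^ p` and fixes `h`. The tensor product of the periodic resolutions of the two cyclic
factors is a free resolution of `K` over the group ring `K[M]`. Applying `σ ^ p` to the
coordinates of this resolution does not commute with its differential, but the defect is a
multiple of `h - 1` and can be corrected by terms involving two elements `w` and `e` of `K[M]`,
the first of which is `g (1 + h + ⋯ + h ^ (p - 1))`. Since `p = 0` in `K`, both have
augmentation zero, so every cochain with trivial coefficients is literally invariant under the
corrected chain map, and comparing this resolution with the bar resolution shows that `σ ^ p`
induces the identity on cohomology. The maps induced by `σ ^ i` are therefore `p`-periodic in
`i`, so their sum over `i < p ^ n` is `p ^ (n - 1)` times their sum over `i < p`, hence zero.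
-/

/-- Elements `a` and `b` of a commutative ring form an exact pair of zero divisors if each of them
generates the annihilator of the other, that is, if multiplication by `a` and by `b` alternately
is an exact sequence. -/
structure IsExactPair {R : Type} [CommRing R] (a b : R) : Prop where
  mul_eq_zero_iff_dvd (x : R) : a * x = 0 ↔ b ∣ x
  mul_eq_zero_iff_dvd' (x : R) : b * x = 0 ↔ a ∣ x

namespace IsExactPair

variable {R : Type} [CommRing R] {a b : R}

theorem symm (h : IsExactPair a b) : IsExactPair b a :=
  ⟨h.mul_eq_zero_iff_dvd', h.mul_eq_zero_iff_dvd⟩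

theorem mul_eq_zero (h : IsExactPair a b) : a * b = 0 :=
  (h.mul_eq_zero_iff_dvd b).2 dvd_rfl

end IsExactPair

/-- The sequence `b, a, b, a, …`: for an exact pair `(a, b)`, multiplication by its `i`-th term is
the differential from degree `i` to degree `i - 1` of the periodic resolution of `R ⧸ (a)`. -/
def alternating {R : Type} (a b : R) (i : ℕ) : R := if Odd i then a else b

section Alternating

variable {R : Type} (a b : R)

theorem alternating_even {i : ℕ} (h : Even i) : alternating a b i = b :=
  if_neg (Nat.not_odd_iff_even.2 h)

theorem alternating_odd {i : ℕ} (h : Odd i) : alternating a b i = a :=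
  if_pos h

theorem alternating_zero : alternating a b 0 = b :=
  if_neg (by decide)

theorem alternating_one : alternating a b 1 = a :=
  if_pos odd_one

theorem alternating_add_two (i : ℕ) : alternating a b (i + 2) = alternating a b i := by
  simp only [alternating, Nat.odd_add, even_two, iff_true]

theorem map_alternating {S F : Type} [FunLike F R S] (f : F) (i : ℕ) :
    f (alternating a b i) = alternating (f a) (f b) i :=
  apply_ite f ..

theorem alternating_mul_alternating_succ [CommRing R] {a b : R} (h : a * b = 0) (i : ℕ) :
    alternating a b i * alternating a b (i + 1) = 0 := by
  rcases Nat.even_or_odd i with hi | hi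
  · rw [alternating_even a b hi, alternating_odd a b hi.add_one, mul_comm, h]
  · rw [alternating_odd a b hi, alternating_even a b hi.add_one, h]

theorem IsExactPair.alternating [CommRing R] {a b : R} (h : IsExactPair a b) (i : ℕ) :
    IsExactPair (alternating a b i) (alternating a b (i + 1)) := by
  rcases Nat.even_or_odd i with hi | hi
  · rw [alternating_even a b hi, alternating_odd a b hi.add_one]
    exact h.symm
  · rw [alternating_odd a b hi, alternating_even a b hi.add_one]
    exact h

end Alternating

theorem exists_seq_of_forall_exists {α : Type} (r : ℕ → α → α → Prop)
    (h₀ : ∃ x y, r 0 x y) (h : ∀ i x y, r i x y → ∃ z, r (i + 1) y z) :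
    ∃ f : ℕ → α, ∀ i, r i (f i) (f (i + 1)) := by
  obtain ⟨x, y, hxy⟩ := h₀
  choose next hnext using h
  let g : (i : ℕ) → {w : α × α // r i w.1 w.2} :=
    Nat.rec ⟨(x, y), hxy⟩ fun i w => ⟨(w.1.2, next i _ _ w.2), hnext i _ _ w.2⟩
  exact ⟨fun i => (g i).1.1, fun i => (g i).2⟩

namespace BiperiodicComplex

open Finset.HasAntidiagonal (antidiagonal mem_antidiagonal)

section Differential

variable {R : Type} [CommRing R] (a b c d : R)

/-- The differential of the total complex of the tensor product of the two periodic complexes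
`⋯ → R --b--> R --a--> R` and `⋯ → R --d--> R --c--> R`. The summand of bidegree `(i, j)` of its
`n`-th term is indexed by `(i, j) ∈ antidiagonal n`. -/
def differential (n : ℕ) : (antidiagonal (n + 1) → R) →ₗ[R] (antidiagonal n → R) where
  toFun z x :=
    alternating a b (x.1.1 + 1) *
        z ⟨(x.1.1 + 1, x.1.2), by have := mem_antidiagonal.1 x.2; simp; omega⟩ +
      (-1) ^ x.1.1 * alternating c d (x.1.2 + 1) *
        z ⟨(x.1.1, x.1.2 + 1), by have := mem_antidiagonal.1 x.2; simp; omega⟩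
  map_add' y z := by ext x; simp only [Pi.add_apply]; ring
  map_smul' r z := by ext x; simp only [Pi.smul_apply, smul_eq_mul, RingHom.id_apply]; ring

variable {a b c d}

theorem differential_apply (n : ℕ) (z : antidiagonal (n + 1) → R) {i j : ℕ}
    (h : (i, j) ∈ antidiagonal n) (h₁ : (i + 1, j) ∈ antidiagonal (n + 1))
    (h₂ : (i, j + 1) ∈ antidiagonal (n + 1)) :
    differential a b c d n z ⟨(i, j), h⟩ = alternating a b (i + 1) * z ⟨(i + 1, j), h₁⟩ +
      (-1) ^ i * alternating c d (j + 1) * z ⟨(i, j + 1), h₂⟩ :=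
  rfl

theorem differential_comp_differential (hab : a * b = 0) (hcd : c * d = 0) (n : ℕ) :
    differential a b c d n ∘ₗ differential a b c d (n + 1) = 0 := by
  refine LinearMap.ext fun z => funext fun ⟨⟨i, j⟩, h⟩ => ?_
  have hn : i + j = n := mem_antidiagonal.1 h
  have hA := alternating_mul_alternating_succ hab (i + 1)
  have hC := alternating_mul_alternating_succ hcd (j + 1)
  rw [LinearMap.comp_apply, differential_apply n _ h (by simp; omega) (by simp; omega),
    differential_apply (n + 1) z _ (by simp; omega) (by simp; omega),
    differential_apply (n + 1) z _ (by simp; omega) (by simp; omega)]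
  change _ = (0 : R)
  linear_combination z ⟨(i + 2, j), by simp; omega⟩ * hA +
    (-1) ^ i * (-1) ^ i * z ⟨(i, j + 2), by simp; omega⟩ * hC

/- A preimage `y` of a cycle `z` is built by recursion on `i`: knowing `y (i, ·)` and
`y (i + 1, ·)`, the cycle condition says that the obstruction to solving for `y (i + 2, ·)` is
annihilated by one element of the pair `(a, b)`, hence is divisible by the other. Only the
first step uses the exactness of the second pair modulo `a`. -/
theorem exists_differential_eq {S : Type} [CommRing S] {ε : R →+* S} (hε : Function.Surjective ε)
    (hker : ∀ x, ε x = 0 ↔ a ∣ x) (hab : IsExactPair a b) (hcd : c * d = 0)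
    (hcd' : IsExactPair (ε c) (ε d)) {n : ℕ}
    {z : antidiagonal (n + 1) → R} (hz : differential a b c d n z = 0) :
    ∃ y, differential a b c d (n + 1) y = z := by
  let A := alternating a b
  let C := alternating c d
  have hz' (i j : ℕ) (h : i + j = n) : A (i + 1) * z ⟨(i + 1, j), by simp; omega⟩ +
      (-1) ^ i * C (j + 1) * z ⟨(i, j + 1), by simp; omega⟩ = 0 :=
    congrFun hz ⟨(i, j), mem_antidiagonal.2 h⟩
  let Solves (i : ℕ) (x y : R) : Prop := ∀ j (h : (i, j) ∈ antidiagonal (n + 1)),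
    A (i + 1) * y + (-1) ^ i * C (j + 1) * x = z ⟨(i, j), h⟩
  have hA₁ : A 1 = a := alternating_one a b
  have start : ∃ x y, Solves 0 x y := by
    have h₀ : ε (C (n + 1)) * ε (z ⟨(0, n + 1), by simp⟩) = 0 := by
      rw [← map_mul, hker]
      exact ⟨-z ⟨(1, n), by simp; omega⟩, by
        linear_combination hz' 0 n (zero_add n) - z ⟨(1, n), by simp; omega⟩ * hA₁⟩
    simp only [C, map_alternating, (hcd'.alternating (n + 1)).mul_eq_zero_iff_dvd] at h₀
    obtain ⟨x', hx⟩ := h₀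
    obtain ⟨x, rfl⟩ := hε x'
    rw [← map_alternating, ← map_mul, ← sub_eq_zero, ← map_sub, hker] at hx
    obtain ⟨y, hy⟩ := hx
    refine ⟨x, y, fun j h => ?_⟩
    obtain rfl : j = n + 1 := by simpa using h
    linear_combination y * hA₁ - hy
  have step (i : ℕ) (x y : R) (h : Solves i x y) : ∃ w, Solves (i + 1) y w := by
    rcases le_or_gt i n with hi | hi
    · obtain ⟨j, rfl⟩ := Nat.exists_eq_add_of_le hi
      have hC : C (j + 1) * C (j + 2) = 0 := alternating_mul_alternating_succ hcd (j + 1)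
      have hy := h (j + 1) (by simp; omega)
      have hA : A (i + 1) * (z ⟨(i + 1, j), by simp; omega⟩ + (-1) ^ i * C (j + 1) * y) = 0 := by
        linear_combination hz' i j rfl + (-1) ^ i * C (j + 1) * hy - (-1) ^ i * (-1) ^ i * x * hC
      obtain ⟨w, hw⟩ := ((hab.alternating (i + 1)).mul_eq_zero_iff_dvd _).1 hA
      refine ⟨w, fun j' h' => ?_⟩
      obtain rfl : j' = j := by have := mem_antidiagonal.1 h'; omega
      linear_combination -hw
    · exact ⟨0, fun j h' => absurd (mem_antidiagonal.1 h') (by omega)⟩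
  obtain ⟨f, hf⟩ := exists_seq_of_forall_exists Solves start step
  exact ⟨fun x => f x.1.1, funext fun ⟨⟨i, j⟩, h⟩ => hf i j h⟩

theorem exists_differential_zero_eq {x : R} (hx : x ∈ Ideal.span {a, c}) :
    ∃ y, differential a b c d 0 y = fun _ => x := by
  obtain ⟨u, v, rfl⟩ := Ideal.mem_span_pair.1 hx
  refine ⟨fun y => if y.1 = (1, 0) then u else v, funext fun ⟨⟨i, j⟩, h⟩ => ?_⟩
  obtain ⟨rfl, rfl⟩ : i = 0 ∧ j = 0 := by simpa using h
  rw [differential_apply 0 _ h (by simp) (by simp)]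
  simp [alternating, mul_comm]

end Differential

section SemilinearMap

variable {R : Type} [CommRing R] (w e : R) (φ : R →+* R)

/-- A chain endomorphism of the total complex that is semilinear over `φ`, where `φ` fixes `c` and
`d`, `φ a = a + c * w` and `φ b = b - c * e`. Since `φ` does not fix `a` and `b`, applying it to
every coordinate does not commute with the differential; the defect is a multiple of `c`, and it is
corrected by maps from bidegree `(i + 1, j)` to `(i, j + 1)` for even `j`. -/
def semilinearMap (n : ℕ) : (antidiagonal n → R) →ₛₗ[φ] (antidiagonal n → R) where
  toFun
    | z, ⟨(i, 0), h⟩ => φ (z ⟨(i, 0), h⟩)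
    | z, ⟨(i, j + 1), h⟩ => φ (z ⟨(i, j + 1), h⟩) + alternating 0 (alternating e w i) j *
        φ (z ⟨(i + 1, j), by have := mem_antidiagonal.1 h; simp; omega⟩)
  map_add' y z := by
    funext ⟨⟨i, j⟩, h⟩
    cases j <;> simp only [Pi.add_apply, map_add]
    ring
  map_smul' r z := by
    funext ⟨⟨i, j⟩, h⟩
    cases j <;> simp only [Pi.smul_apply, smul_eq_mul, map_mul]
    ring

theorem semilinearMap_apply_zero (n : ℕ) (z : antidiagonal n → R) {i : ℕ}
    (h : (i, 0) ∈ antidiagonal n) : semilinearMap w e φ n z ⟨(i, 0), h⟩ = φ (z ⟨(i, 0), h⟩) :=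
  rfl

theorem semilinearMap_apply_succ (n : ℕ) (z : antidiagonal n → R) {i j : ℕ}
    (h : (i, j + 1) ∈ antidiagonal n) (h' : (i + 1, j) ∈ antidiagonal n) :
    semilinearMap w e φ n z ⟨(i, j + 1), h⟩ =
      φ (z ⟨(i, j + 1), h⟩) + alternating 0 (alternating e w i) j * φ (z ⟨(i + 1, j), h'⟩) :=
  rfl

variable {a b c d w e φ}

theorem map_alternating_succ (ha : φ a = a + c * w) (hb : φ b = b - c * e) (i : ℕ) :
    φ (alternating a b (i + 1)) =
      alternating a b (i + 1) + (-1) ^ i * c * alternating e w i := by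
  rcases Nat.even_or_odd i with hi | hi
  · simp only [alternating_even _ _ hi, alternating_odd _ _ hi.add_one, ha, hi.neg_one_pow, one_mul]
  · simp only [alternating_odd _ _ hi, alternating_even _ _ hi.add_one, hb, hi.neg_one_pow]
    ring

theorem alternating_mul_map_alternating (ha : φ a = a + c * w) (hb : φ b = b - c * e)
    (hw : w * φ b = a * e) (i : ℕ) :
    alternating e w i * φ (alternating a b i) =
      alternating a b (i + 1) * alternating e w (i + 1) := by
  rcases Nat.even_or_odd i with hi | hi
  · simp only [alternating_even _ _ hi, alternating_odd _ _ hi.add_one, hw]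
  · simp only [alternating_odd _ _ hi, alternating_even _ _ hi.add_one]
    linear_combination e * ha - hw + w * hb

theorem differential_comp_semilinearMap (ha : φ a = a + c * w) (hb : φ b = b - c * e)
    (hc : φ c = c) (hd : φ d = d) (hw : w * φ b = a * e) (n : ℕ) (z : antidiagonal (n + 1) → R) :
    differential a b c d n (semilinearMap w e φ (n + 1) z) =
      semilinearMap w e φ n (differential a b c d n z) := by
  funext ⟨⟨i, j⟩, h⟩
  have hn : i + j = n := mem_antidiagonal.1 h
  have hA := map_alternating_succ ha hb i
  have hC (j : ℕ) : φ (alternating c d j) = alternating c d j := by rw [map_alternating, hc, hd]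
  rw [differential_apply n _ h (by simp; omega) (by simp; omega),
    semilinearMap_apply_succ _ _ _ _ _ _ (by simp; omega)]
  rcases j with _ | j
  · rw [semilinearMap_apply_zero, semilinearMap_apply_zero,
      differential_apply n z h (by simp; omega) (by simp; omega)]
    simp only [map_add, map_mul, map_pow, map_neg, map_one, hA, hc,
      zero_add, alternating_zero, alternating_one]
    ring
  · have hκ := alternating_mul_map_alternating ha hb hw i
    rw [semilinearMap_apply_succ _ _ _ _ _ _ (by simp; omega),
      semilinearMap_apply_succ _ _ _ _ _ _ (by simp; omega),
      differential_apply n z h (by simp; omega) (by simp; omega),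
      differential_apply n z _ (by simp; omega) (by simp; omega)]
    simp only [map_add, map_mul, map_pow, map_neg, map_one, hC, hA, pow_succ]
    rcases Nat.even_or_odd j with hj | hj
    · simp only [alternating_even _ _ hj, alternating_odd _ _ hj.add_one, alternating_add_two]
      linear_combination -φ (z ⟨(i + 2, j), by simp; omega⟩) * hκ
    · simp only [alternating_odd _ _ hj, alternating_even _ _ hj.add_one, alternating_add_two]
      ring

end SemilinearMap

end BiperiodicComplex

theorem IsExactPair.of_map_ringEquiv {R S : Type} [CommRing R] [CommRing S] {a b : R} (f : R ≃+* S)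
    (h : IsExactPair (f a) (f b)) : IsExactPair a b where
  mul_eq_zero_iff_dvd x := by
    rw [← map_dvd_iff f, ← h.mul_eq_zero_iff_dvd, ← map_mul, map_eq_zero_iff f f.injective]
  mul_eq_zero_iff_dvd' x := by
    rw [← map_dvd_iff f, ← h.mul_eq_zero_iff_dvd', ← map_mul, map_eq_zero_iff f f.injective]

section GroupAlgebra

open MonoidAlgebra

/-- The augmentation of the monoid algebra `S[C]`, the sum of the coefficients. -/
def augmentation (S C : Type) [CommRing S] [Monoid C] : S[C] →ₐ[S] S :=
  lift S S C 1

@[simp] theorem augmentation_single {S C : Type} [CommRing S] [Monoid C] (x : C) (r : S) :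
    augmentation S C (single x r) = r := by
  simp [augmentation]

theorem augmentation_surjective {S C : Type} [CommRing S] [Monoid C] :
    Function.Surjective (augmentation S C) :=
  fun r => ⟨single 1 r, augmentation_single 1 r⟩

section Cyclic

variable {S C : Type} [CommRing S] [CommGroup C] {g : C}

theorem of_sub_one_dvd_of_augmentation_eq_zero [Finite C] (hg : ∀ x, x ∈ Subgroup.zpowers g)
    (y : S[C]) (hy : augmentation S C y = 0) : of S C g - 1 ∣ y := by
  suffices ∀ y : S[C], of S C g - 1 ∣ y - single 1 (augmentation S C y) by simpa [hy] using this y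
  intro y
  induction y using MonoidAlgebra.induction_linear with
  | zero => simp
  | add x y hx hy =>
    rw [map_add, single_add, add_sub_add_comm]
    exact dvd_add hx hy
  | single x r =>
    obtain ⟨i, rfl⟩ := mem_powers_iff_mem_zpowers.2 (hg x)
    have : single (g ^ i) r - single 1 r = (of S C g ^ i - 1 ^ i) * single 1 r := by
      rw [← map_pow]; simp [sub_mul, one_def, single_mul_single]
    rw [augmentation_single, this]
    exact (sub_dvd_pow_sub_pow _ _ i).mul_right _

theorem augmentation_eq_zero_iff_dvd [Finite C] (hg : ∀ x, x ∈ Subgroup.zpowers g) (y : S[C]) :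
    augmentation S C y = 0 ↔ of S C g - 1 ∣ y := by
  refine ⟨of_sub_one_dvd_of_augmentation_eq_zero hg y, ?_⟩
  rintro ⟨x, rfl⟩
  simp

theorem coeff_geom_sum_of [Finite C] (hg : ∀ x, x ∈ Subgroup.zpowers g) (x : C) :
    (∑ i ∈ Finset.range (orderOf g), of S C g ^ i).coeff x = 1 := by
  classical
  have := Fintype.ofFinite C
  have h : ∑ i ∈ Finset.range (orderOf g), of S C g ^ i = ∑ y : C, of S C y := by
    rw [← IsCyclic.image_range_orderOf hg, Finset.sum_image]
    · simp
    · intro i hi j hj h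
      exact pow_injOn_Iio_orderOf (by simpa using hi) (by simpa using hj) h
  rw [h]
  simp [coeff_sum, coeff_single, Finsupp.single_apply]

theorem of_sub_one_mul_geom_sum :
    (of S C g - 1) * ∑ i ∈ Finset.range (orderOf g), of S C g ^ i = 0 := by
  rw [mul_geom_sum, ← map_pow, pow_orderOf_eq_one, map_one, sub_self]

theorem coeff_eq_coeff_one_of_of_mul_eq [Finite C] (hg : ∀ x, x ∈ Subgroup.zpowers g) {y : S[C]}
    (hy : of S C g * y = y) (x : C) : y.coeff x = y.coeff 1 := by
  have step (x : C) : y.coeff (g * x) = y.coeff x := by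
    conv_lhs => rw [← hy]
    rw [of_apply, coeff_single_mul_mul, one_mul]
  obtain ⟨i, rfl⟩ := mem_powers_iff_mem_zpowers.2 (hg x)
  change y.coeff (g ^ i) = _
  induction i with
  | zero => rw [pow_zero]
  | succ i ih => rw [pow_succ', step, ih]

theorem geom_sum_of_dvd_of_mul_eq_zero [Finite C] (hg : ∀ x, x ∈ Subgroup.zpowers g) {y : S[C]}
    (hy : (of S C g - 1) * y = 0) : ∑ i ∈ Finset.range (orderOf g), of S C g ^ i ∣ y := by
  have hy' : of S C g * y = y := by linear_combination hy
  refine ⟨single 1 (y.coeff 1), MonoidAlgebra.ext (Finsupp.ext fun x => ?_)⟩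
  rw [coeff_mul_single_one, coeff_geom_sum_of hg, one_mul, coeff_eq_coeff_one_of_of_mul_eq hg hy']

theorem augmentation_eq_zero_of_geom_sum_mul_eq_zero [Finite C]
    (hg : ∀ x, x ∈ Subgroup.zpowers g) {y : S[C]}
    (hy : (∑ i ∈ Finset.range (orderOf g), of S C g ^ i) * y = 0) : augmentation S C y = 0 := by
  let r := augmentation S C y
  obtain ⟨x, hx⟩ : of S C g - 1 ∣ y - single 1 r :=
    (augmentation_eq_zero_iff_dvd hg _).1 (by simp [r])
  have hr : (∑ i ∈ Finset.range (orderOf g), of S C g ^ i) * single 1 r = 0 := by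
    linear_combination hy - (∑ i ∈ Finset.range (orderOf g), of S C g ^ i) * hx -
      x * of_sub_one_mul_geom_sum (S := S) (g := g)
  calc
    r = ((∑ i ∈ Finset.range (orderOf g), of S C g ^ i) * single 1 r).coeff 1 := by
      rw [coeff_mul_single_one, coeff_geom_sum_of hg, one_mul]
    _ = 0 := by rw [hr, coeff_zero, Finsupp.zero_apply]

theorem isExactPair_of_sub_one_geom_sum [Finite C] (hg : ∀ x, x ∈ Subgroup.zpowers g) :
    IsExactPair (of S C g - 1) (∑ i ∈ Finset.range (orderOf g), of S C g ^ i) where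
  mul_eq_zero_iff_dvd y := by
    refine ⟨geom_sum_of_dvd_of_mul_eq_zero hg, ?_⟩
    rintro ⟨x, rfl⟩
    rw [← mul_assoc, of_sub_one_mul_geom_sum, zero_mul]
  mul_eq_zero_iff_dvd' y := by
    rw [← augmentation_eq_zero_iff_dvd hg]
    refine ⟨augmentation_eq_zero_of_geom_sum_mul_eq_zero hg, fun hy => ?_⟩
    obtain ⟨x, rfl⟩ := (augmentation_eq_zero_iff_dvd hg y).1 hy
    rw [← mul_assoc, mul_comm (Finset.sum ..), of_sub_one_mul_geom_sum, zero_mul]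

end Cyclic

end GroupAlgebra

theorem sum_range_mul_of_periodic {A : Type} [AddCommMonoid A] {f : ℕ → A} {n : ℕ}
    (hf : Function.Periodic f n) (m : ℕ) :
    ∑ i ∈ Finset.range (m * n), f i = m • ∑ i ∈ Finset.range n, f i := by
  induction m with
  | zero => simp
  | succ m ih =>
    have hm (i : ℕ) : f (m * n + i) = f i := (congrArg f (add_comm ..)).trans (hf.nat_mul m i)
    simp only [add_mul, one_mul, Finset.sum_range_add, ih, hm, succ_nsmul]

theorem sum_range_mul_pow_eq_zero {R : Type} [CommRing R] {h : R} {p q : ℕ} (hp : (p : R) = 0)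
    (hh : h ^ q = 1) : ∑ l ∈ Finset.range (p * q), h ^ l = 0 := by
  have periodic : Function.Periodic (h ^ ·) q := fun l => by simp [pow_add, hh]
  rw [sum_range_mul_of_periodic periodic, nsmul_eq_mul, hp, zero_mul]

/- `w = g (1 + h + ⋯ + h^(p-1))` and `e = -∑ i < q, g^i (1 + h + ⋯ + h^(pi-1))` -/
theorem exists_correction {R A : Type} [CommRing R] [CommRing A] (α : R →+* A) {g h : R} {p q : ℕ}
    (hp : (p : R) = 0) (hh : h ^ q = 1) (hαg : α g = 1) (hαh : α h = 1) :
    ∃ w e : R, g * h ^ p - 1 = (g - 1) + (h - 1) * w ∧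
      ∑ i ∈ Finset.range q, (g * h ^ p) ^ i = ∑ i ∈ Finset.range q, g ^ i - (h - 1) * e ∧
      w * ∑ i ∈ Finset.range q, (g * h ^ p) ^ i = (g - 1) * e ∧ α w = 0 ∧ α e = 0 := by
  have hpA : (p : A) = 0 := by rw [← map_natCast α, hp, map_zero]
  let S (m : ℕ) : R := ∑ l ∈ Finset.range m, h ^ l
  have hS (m : ℕ) : (h - 1) * S m = h ^ m - 1 := mul_geom_sum h m
  have hS_succ (i : ℕ) : S (p * (i + 1)) = S (p * i) + (h ^ p) ^ i * S p := by
    simp only [S, mul_add, mul_one, Finset.sum_range_add, pow_add, pow_mul, Finset.mul_sum]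
  have hαS (m : ℕ) : α (S m) = m := by simp [S, hαh]
  have telescope :
      ∑ i ∈ Finset.range q, (g ^ (i + 1) * S (p * (i + 1)) - g ^ i * S (p * i)) = 0 := by
    rw [Finset.sum_range_sub (fun i => g ^ i * S (p * i))]
    simp [S, sum_range_mul_pow_eq_zero hp hh]
  refine ⟨g * S p, -∑ i ∈ Finset.range q, g ^ i * S (p * i), ?_, ?_, ?_, ?_, ?_⟩
  · linear_combination -g * hS p
  · simp only [mul_neg, sub_neg_eq_add, Finset.mul_sum, ← Finset.sum_add_distrib]
    refine Finset.sum_congr rfl fun i _ => ?_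
    rw [mul_pow, ← pow_mul]
    linear_combination -g ^ i * hS (p * i)
  · rw [← sub_eq_zero, ← telescope]
    simp only [Finset.mul_sum, mul_neg, sub_neg_eq_add, ← Finset.sum_add_distrib, hS_succ]
    refine Finset.sum_congr rfl fun i _ => ?_
    ring
  · rw [map_mul, hαS, hpA, mul_zero]
  · simp [hαg, hαS, hpA]

section Product

open MonoidAlgebra

variable (K : Type) [CommRing K] {M C D : Type} [CommGroup M] [CommGroup C] [CommGroup D]
  (f : M ≃* C × D) (g : C) (h : D)

/-- The isomorphism of the group algebra of `M ≃* C × D` with the group algebra of `C` over the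
group algebra of `D`. -/
def curryEquiv : K[M] ≃+* K[D][C] :=
  (mapDomainRingEquiv K f).trans curryRingEquiv

theorem curryEquiv_of (x : C) (y : D) :
    curryEquiv K f (of K M (f.symm (x, y))) = single x (of K D y) := by
  simp [curryEquiv]

theorem augmentation_curryEquiv (x : K[M]) :
    augmentation K D (augmentation K[D] C (curryEquiv K f x)) = augmentation K M x := by
  induction x using MonoidAlgebra.induction_linear with
  | zero => simp only [map_zero]
  | add x y hx hy => simp only [map_add, hx, hy]
  | single x r =>
    obtain ⟨⟨y, z⟩, rfl⟩ := f.symm.surjective x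
    simp [curryEquiv, augmentation_single]

/-- The map of group algebras induced by the second projection of `M ≃* C × D`. -/
def sndMap : K[M] →+* K[D] :=
  (augmentation K[D] C : K[D][C] →+* K[D]).comp (curryEquiv K f : K[M] →+* K[D][C])

theorem sndMap_surjective : Function.Surjective (sndMap K f) :=
  augmentation_surjective.comp (curryEquiv K f).surjective

theorem sndMap_of (x : C) (y : D) : sndMap K f (of K M (f.symm (x, y))) = of K D y := by
  simp [sndMap, curryEquiv]

variable {K f g h}

theorem sndMap_eq_zero_iff_dvd [Finite C] (hg : ∀ x, x ∈ Subgroup.zpowers g) (x : K[M]) :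
    sndMap K f x = 0 ↔ of K M (f.symm (g, 1)) - 1 ∣ x := by
  rw [← map_dvd_iff (curryEquiv K f), map_sub, map_one, curryEquiv_of]
  exact augmentation_eq_zero_iff_dvd hg _

theorem isExactPair_left [Finite C] (hg : ∀ x, x ∈ Subgroup.zpowers g) :
    IsExactPair (of K M (f.symm (g, 1)) - 1)
      (∑ i ∈ Finset.range (orderOf g), of K M (f.symm (g, 1)) ^ i) := by
  refine .of_map_ringEquiv (curryEquiv K f) ?_
  simp only [map_sub, map_one, map_sum, map_pow, curryEquiv_of]
  exact isExactPair_of_sub_one_geom_sum hg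

theorem isExactPair_right [Finite D] (hh : ∀ x, x ∈ Subgroup.zpowers h) :
    IsExactPair (sndMap K f (of K M (f.symm (1, h)) - 1))
      (sndMap K f (∑ i ∈ Finset.range (orderOf h), of K M (f.symm (1, h)) ^ i)) := by
  simp only [map_sub, map_one, map_sum, map_pow, sndMap_of]
  exact isExactPair_of_sub_one_geom_sum hh

theorem mem_span_of_augmentation_eq_zero [Finite C] [Finite D]
    (hg : ∀ x, x ∈ Subgroup.zpowers g) (hh : ∀ x, x ∈ Subgroup.zpowers h) {x : K[M]}
    (hx : augmentation K M x = 0) :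
    x ∈ Ideal.span {of K M (f.symm (g, 1)) - 1, of K M (f.symm (1, h)) - 1} := by
  rw [← augmentation_curryEquiv K f] at hx
  obtain ⟨y, hy⟩ := (augmentation_eq_zero_iff_dvd hh _).1 hx
  obtain ⟨z, rfl⟩ := sndMap_surjective K f y
  have hz : sndMap K f (x - (of K M (f.symm (1, h)) - 1) * z) = 0 := by
    rw [map_sub, map_mul, map_sub, map_one, sndMap_of, sub_eq_zero]
    exact hy
  obtain ⟨y, hy⟩ := (sndMap_eq_zero_iff_dvd hg _).1 hz
  exact Ideal.mem_span_pair.2 ⟨y, z, by linear_combination -hy⟩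

end Product

section RepOfModule

open MonoidAlgebra

variable (K : Type) [CommRing K] {H : Type} [Group H]
  (M : Type) [AddCommGroup M] [Module K M] [Module K[H] M] [IsScalarTower K K[H] M]

theorem asAlgebraHom_ofModule' :
    (Representation.ofModule' (k := K) (G := H) M).asAlgebraHom = Algebra.lsmul K K M :=
  (MonoidAlgebra.lift K (M →ₗ[K] M) H).apply_symm_apply _

/-- The module associated with the representation associated with a module `M` is `M`. -/
def asModuleOfModule'Equiv :
    (Representation.ofModule' (k := K) (G := H) M).asModule ≃ₗ[K[H]] M :=
  { (Representation.ofModule' (k := K) (G := H) M).asModuleEquiv with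
    map_smul' := fun r x =>
      (Representation.asModuleEquiv_map_smul _ r x).trans <| by rw [asAlgebraHom_ofModule']; rfl }

/-- A `K[H]`-module, viewed as a representation of `H`. -/
abbrev repOfModule : Rep K H := Rep.of (Representation.ofModule' (k := K) (G := H) M)

instance projective_repOfModule [Module.Projective K[H] M] :
    Projective (repOfModule (H := H) K M) := by
  have : Module.Projective K[H] (Representation.ofModule' (k := K) (G := H) M).asModule :=
    .of_equiv (asModuleOfModule'Equiv K M).symm
  rw [← Rep.equivalenceModuleMonoidAlgebra.map_projective_iff]
  exact inferInstanceAs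
    (Projective (ModuleCat.of K[H] (Representation.ofModule' (k := K) (G := H) M).asModule))

variable {K M}

theorem repOfModule_hom_trivial_smul (f : repOfModule (H := H) K M ⟶ Rep.trivial K H K)
    (x : K[H]) (z : M) : f.hom (x • z) = augmentation K H x * f.hom z := by
  induction x using MonoidAlgebra.induction_linear with
  | zero => simp
  | add x y hx hy => rw [map_add, add_mul, ← hx, ← hy, add_smul, map_add]
  | single g r =>
    have h : f.hom (of K H g • z) = f.hom z := Rep.hom_comm_apply f g z
    rw [augmentation_single, ← h, ← smul_eq_mul, ← map_smul, ← smul_assoc, of_apply, smul_single,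
      smul_eq_mul, mul_one]

/-- A semilinear map over the augmentation, as a morphism to the trivial representation. -/
def repOfModuleToTrivial (f : M →ₛₗ[(augmentation K H).toRingHom] K) :
    repOfModule (H := H) K M ⟶ Rep.trivial K H K :=
  Rep.ofHom
    { toFun := f
      map_add' := map_add f
      map_smul' := fun r z => by
        rw [← algebraMap_smul K[H] r z, map_smulₛₗ]
        simp
      isIntertwining' := fun _ => LinearMap.ext fun z => by
        exact (map_smulₛₗ f _ z).trans <| by simp }

variable {N : Type} [AddCommGroup N] [Module K N] [Module K[H] N] [IsScalarTower K K[H] N]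

/-- A linear map of `K[H]`-modules, as a morphism of representations. -/
def repOfModuleMap (f : M →ₗ[K[H]] N) : repOfModule (H := H) K M ⟶ repOfModule (H := H) K N :=
  Rep.ofHom
    { f.restrictScalars K with
      isIntertwining' := fun _ => LinearMap.ext fun z => f.map_smul _ z }

/-- A map of `K[H]`-modules that is semilinear over an automorphism `φ` of `H`, as a morphism to
the restriction along `φ`. -/
def repOfModuleToRes {φ : H ≃* H} (f : M →ₛₗ[mapDomainRingHom K φ.toMonoidHom] N) :
    repOfModule K M ⟶ (Rep.resFunctor φ.toMonoidHom).obj (repOfModule K N) :=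
  Rep.ofHom
    { toFun := f
      map_add' := map_add f
      map_smul' := fun r z => by
        rw [← algebraMap_smul K[H] r z, map_smulₛₗ, RingHom.id_apply,
          ← algebraMap_smul K[H] r (f z)]
        congr 1
        simp
      isIntertwining' := fun g => LinearMap.ext fun z => by
        refine (map_smulₛₗ f _ z).trans ?_
        change _ = of K H (φ g) • f z
        simp }

end RepOfModule

section SingleFunctor

open Limits

variable {V : Type 1} [Category.{0} V] [Abelian V]

theorem quasiIso_single₀_of_exact {C : ChainComplex V ℕ} {T : V}
    (π : C ⟶ (ChainComplex.single₀ V).obj T) [Epi (π.f 0)]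
    (h₀ : (ShortComplex.mk _ _ (C.toSingle₀Equiv T π).2).Exact)
    (h : ∀ n, (ShortComplex.mk _ _ (C.d_comp_d (n + 2) (n + 1) n)).Exact) : QuasiIso π where
  quasiIsoAt n := by
    cases n with
    | zero =>
      rw [ChainComplex.quasiIsoAt₀_iff,
        ShortComplex.quasiIso_iff_of_zeros' _ (C.shape 0 0 (by simp)) rfl rfl]
      exact ⟨h₀, inferInstanceAs (Epi (π.f 0))⟩
    | succ n =>
      rw [quasiIsoAt_iff_exactAt' (hL := ChainComplex.exactAt_succ_single_obj ..),
        HomologicalComplex.exactAt_iff' _ (n + 2) (n + 1) n (by simp) (by simp)]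
      exact h n

end SingleFunctor

section ModuleResolution

open MonoidAlgebra

variable {K : Type} [CommRing K] {H : Type} [Group H] {X : ℕ → Type}
  [∀ n, AddCommGroup (X n)] [∀ n, Module K (X n)] [∀ n, Module K[H] (X n)]
  [∀ n, IsScalarTower K K[H] (X n)] {d : ∀ n, X (n + 1) →ₗ[K[H]] X n}

/-- A sequence of `K[H]`-linear maps with trivial composites, as a complex of representations. -/
def complexOfModules (hd : ∀ n, d n ∘ₗ d (n + 1) = 0) : ChainComplex (Rep K H) ℕ :=
  ChainComplex.of (fun n => repOfModule K (X n)) (fun n => repOfModuleMap (d n)) fun n =>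
    Rep.hom_ext (Representation.IntertwiningMap.ext
      (LinearMap.ext fun z => LinearMap.congr_fun (hd n) z))

theorem complexOfModules_d (hd : ∀ n, d n ∘ₗ d (n + 1) = 0) (n : ℕ) :
    (complexOfModules hd).d (n + 1) n = repOfModuleMap (d n) :=
  ChainComplex.of_d (fun n => repOfModule K (X n)) (fun n => repOfModuleMap (d n)) n

theorem rep_exact_of_function_exact {A B C : Rep K H} {f : A ⟶ B} {g : B ⟶ C} (w : f ≫ g = 0)
    (h : Function.Exact f.hom g.hom) : (ShortComplex.mk f g w).Exact := by
  apply (forget₂ (Rep K H) (ModuleCat K)).reflects_exact_of_faithful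
  rw [ShortComplex.moduleCat_exact_iff]
  exact fun z => (h z).1

variable {ε : X 0 →ₛₗ[(augmentation K H).toRingHom] K}

/-- The chain map to the trivial representation given by an augmentation `ε`. -/
def complexOfModulesAugmentation (hd : ∀ n, d n ∘ₗ d (n + 1) = 0) (hdε : ∀ y, ε (d 0 y) = 0) :
    complexOfModules hd ⟶ (ChainComplex.single₀ (Rep K H)).obj (Rep.trivial K H K) :=
  ((complexOfModules hd).toSingle₀Equiv _).symm ⟨repOfModuleToTrivial ε, by
    rw [complexOfModules_d]
    exact Rep.hom_ext (Representation.IntertwiningMap.ext (LinearMap.ext hdε))⟩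

theorem complexOfModulesAugmentation_f_zero (hd : ∀ n, d n ∘ₗ d (n + 1) = 0)
    (hdε : ∀ y, ε (d 0 y) = 0) :
    (complexOfModulesAugmentation hd hdε).f 0 = repOfModuleToTrivial ε :=
  ChainComplex.toSingle₀Equiv_symm_apply_f_zero _ _

theorem quasiIso_complexOfModulesAugmentation (hd : ∀ n, Function.Exact (d (n + 1)) (d n))
    (hdε : Function.Exact (d 0) ε) (hε : Function.Surjective ε) :
    QuasiIso (complexOfModulesAugmentation (fun n => (hd n).linearMap_comp_eq_zero)
      hdε.apply_apply_eq_zero) := by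
  have h₀ := complexOfModulesAugmentation_f_zero (fun n => (hd n).linearMap_comp_eq_zero)
    hdε.apply_apply_eq_zero
  have : Epi ((complexOfModulesAugmentation (fun n => (hd n).linearMap_comp_eq_zero)
      hdε.apply_apply_eq_zero).f 0) := by
    rw [h₀]
    exact (Rep.epi_iff_surjective _).2 hε
  refine quasiIso_single₀_of_exact _ (rep_exact_of_function_exact _ ?_)
    fun n => rep_exact_of_function_exact _ ?_
  · rw [ChainComplex.toSingle₀Equiv_apply_coe, h₀, complexOfModules_d]
    exact hdε
  · rw [complexOfModules_d, complexOfModules_d]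
    exact hd n

/-- An exact sequence of projective `K[H]`-modules with augmentation `ε`, as a projective
resolution of the trivial representation. -/
def resolutionOfModules [∀ n, Module.Projective K[H] (X n)]
    (hd : ∀ n, Function.Exact (d (n + 1)) (d n)) (hdε : Function.Exact (d 0) ε)
    (hε : Function.Surjective ε) :
    ProjectiveResolution (Rep.trivial K H K) where
  complex := complexOfModules fun n => (hd n).linearMap_comp_eq_zero
  projective n := inferInstanceAs (Projective (repOfModule K (X n)))
  π := complexOfModulesAugmentation _ hdε.apply_apply_eq_zero
  quasiIso := quasiIso_complexOfModulesAugmentation hd hdε hε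

end ModuleResolution

section Twist

variable {V : Type 1} [Category.{0} V] {F : V ⥤ V} {T X Y : V}

/-- The action on `T`-valued maps of a map `a : X ⟶ F X`, where `τ` compares `F T` with `T`. -/
def twist (τ : F.obj T ⟶ T) (a : X ⟶ F.obj X) (f : X ⟶ T) : X ⟶ T := a ≫ F.map f ≫ τ

theorem twist_add [Preadditive V] [F.Additive] (τ : F.obj T ⟶ T) (a : X ⟶ F.obj X) (f g : X ⟶ T) :
    twist τ a (f + g) = twist τ a f + twist τ a g := by
  simp only [twist, F.map_add, Preadditive.add_comp, Preadditive.comp_add]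

theorem twist_comp_eq_comp_map (τ : F.obj T ⟶ T) (a : X ⟶ F.obj X) (u : X ⟶ Y) (f : Y ⟶ T) :
    twist τ a (u ≫ f) = (a ≫ F.map u) ≫ F.map f ≫ τ := by
  simp only [twist, F.map_comp, Category.assoc]

theorem twist_comp (τ : F.obj T ⟶ T) {a : X ⟶ F.obj X} {b : Y ⟶ F.obj Y} {u : X ⟶ Y}
    (h : a ≫ F.map u = u ≫ b) (f : Y ⟶ T) : twist τ a (u ≫ f) = u ≫ twist τ b f := by
  rw [twist_comp_eq_comp_map, h, Category.assoc, twist]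

end Twist

section Cohomologous

variable {ι : Type} {c : ComplexShape ι} {V : Type 1} [Category.{0} V] [Preadditive V]
  {C D : HomologicalComplex V c} {T : V} {s : ι}

/-- Two `T`-valued cochains of a complex are cohomologous if they differ by a coboundary. -/
def Cohomologous (f g : C.X s ⟶ T) : Prop :=
  ∃ h : C.X (c.next s) ⟶ T, f = g + C.d s (c.next s) ≫ h

namespace Cohomologous

theorem symm {f g : C.X s ⟶ T} : Cohomologous f g → Cohomologous g f := by
  rintro ⟨h, rfl⟩
  exact ⟨-h, by simp⟩

theorem trans {f g l : C.X s ⟶ T} : Cohomologous f g → Cohomologous g l → Cohomologous f l := by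
  rintro ⟨h, rfl⟩ ⟨h', rfl⟩
  exact ⟨h' + h, by rw [Preadditive.comp_add, add_assoc]⟩

theorem of_homotopy {u v : C ⟶ D} (e : Homotopy u v) {f : D.X s ⟶ T}
    (hf : D.d (c.prev s) s ≫ f = 0) : Cohomologous (u.f s ≫ f) (v.f s ≫ f) :=
  ⟨e.hom _ s ≫ f, by simp [e.comm s, prevD, dNext, hf, add_comm]⟩

variable {F : V ⥤ V} [F.Additive]

theorem map_twist {f g : C.X s ⟶ T} (τ : F.obj T ⟶ T)
    (φ : C ⟶ (F.mapHomologicalComplex c).obj C) :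
    Cohomologous f g → Cohomologous (twist τ (φ.f s) f) (twist τ (φ.f s) g) := by
  rintro ⟨h, rfl⟩
  exact ⟨twist τ (φ.f _) h,
    (twist_add ..).trans (congrArg _ (twist_comp τ (φ.comm s (c.next s)) h))⟩

theorem twist_comp_of_homotopy (τ : F.obj T ⟶ T) {φ : C ⟶ (F.mapHomologicalComplex c).obj C}
    {ψ : D ⟶ (F.mapHomologicalComplex c).obj D} {α : C ⟶ D}
    (e : Homotopy (φ ≫ (F.mapHomologicalComplex c).map α) (α ≫ ψ)) {f : D.X s ⟶ T}
    (hf : D.d (c.prev s) s ≫ f = 0) :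
    Cohomologous (twist τ (φ.f s) (α.f s ≫ f)) (α.f s ≫ twist τ (ψ.f s) f) := by
  obtain ⟨h, hh⟩ := of_homotopy (s := s) (f := F.map f ≫ τ) e <|
    (F.map_comp_assoc _ _ _).symm.trans <| by rw [hf, F.map_zero]; exact Limits.zero_comp
  exact ⟨h, (twist_comp_eq_comp_map τ (φ.f s) (α.f s) f).trans <|
    hh.trans (congrArg (· + _) (Category.assoc _ _ _))⟩

end Cohomologous

end Cohomologous

section Comparison

variable {V : Type 1} [Category.{0} V] [Abelian V] {F : V ⥤ V} [F.Additive]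
  [F.PreservesProjectiveObjects] [F.PreservesHomology] {T : V} {P Q : ProjectiveResolution T}

theorem comp_mapProjectiveResolution_π {C : ChainComplex V ℕ} {τ : T ≅ F.obj T}
    {u : C ⟶ (F.mapHomologicalComplex _).obj P.complex}
    {v : C ⟶ (ChainComplex.single₀ V).obj T}
    (h : u.f 0 ≫ F.map (P.π.f 0) ≫ τ.inv = v.f 0) :
    u ≫ (F.mapProjectiveResolution P).π = v ≫ (ChainComplex.single₀ V).map τ.hom := by
  have hj : ((HomologicalComplex.singleMapHomologicalComplex F
      (ComplexShape.down ℕ) 0).hom.app T).f 0 = 𝟙 (F.obj T) := by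
    rw [HomologicalComplex.singleMapHomologicalComplex_hom_app_self]
    change F.map (𝟙 T) ≫ 𝟙 (F.obj T) = _
    rw [F.map_id, Category.id_comp]
  apply HomologicalComplex.to_single_hom_ext
  dsimp [Functor.mapProjectiveResolution]
  rw [hj, ChainComplex.single₀_map_f_zero]
  exact (congrArg (u.f 0 ≫ ·) (Category.comp_id _)).trans <|
    (Iso.comp_inv_eq τ).1 ((Category.assoc _ _ _).trans h)

variable {τ : T ≅ F.obj T} {φP : P.complex ⟶ (F.mapHomologicalComplex _).obj P.complex}
  {φQ : Q.complex ⟶ (F.mapHomologicalComplex _).obj Q.complex}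

/-- Lifts of `τ` to two projective resolutions agree up to homotopy. -/
def comparisonHomotopy {α : Q.complex ⟶ P.complex} (hα : α ≫ P.π = Q.π)
    (hP : twist (T := T) τ.inv (φP.f 0) (P.π.f 0) = P.π.f 0)
    (hQ : twist (T := T) τ.inv (φQ.f 0) (Q.π.f 0) = Q.π.f 0) :
    Homotopy (φQ ≫ (F.mapHomologicalComplex _).map α) (α ≫ φP) := by
  have hα₀ : α.f 0 ≫ P.π.f 0 = Q.π.f 0 := congrArg (fun u => u.f 0) hα
  refine ProjectiveResolution.liftHomotopy (P := Q) (Q := F.mapProjectiveResolution P)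
    τ.hom _ _ (comp_mapProjectiveResolution_π ?_) (comp_mapProjectiveResolution_π ?_)
  · refine (twist_comp_eq_comp_map (T := T) τ.inv (φQ.f 0) (α.f 0) (P.π.f 0)).symm.trans ?_
    exact (congrArg (twist (T := T) τ.inv (φQ.f 0)) hα₀).trans hQ
  · exact (Category.assoc _ _ _).trans ((congrArg (α.f 0 ≫ ·) hP).trans hα₀)

theorem cohomologous_twist_of_forall_twist_eq
    (hQ : twist (T := T) τ.inv (φQ.f 0) (Q.π.f 0) = Q.π.f 0)
    (hP : ∀ s (f : P.complex.X s ⟶ T), twist τ.inv (φP.f s) f = f)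
    {s : ℕ} {f : Q.complex.X s ⟶ T} (hf : Q.complex.d (s + 1) s ≫ f = 0) :
    Cohomologous (twist τ.inv (φQ.f s) f) f := by
  let E := ProjectiveResolution.homotopyEquiv Q P
  rw [← ChainComplex.prev ℕ s] at hf
  let g : P.complex.X s ⟶ T := E.inv.f s ≫ f
  have hg : P.complex.d ((ComplexShape.down ℕ).prev s) s ≫ g = 0 := by
    rw [← E.inv.comm_assoc, hf, Limits.comp_zero]
  have key : Cohomologous (E.hom.f s ≫ g) f := by
    simpa [g] using Cohomologous.of_homotopy E.homotopyHomInvId hf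
  have lift := Cohomologous.twist_comp_of_homotopy τ.inv
    (comparisonHomotopy (ProjectiveResolution.homotopyEquiv_hom_π Q P) (hP 0 _) hQ) hg
  rw [hP s g] at lift
  exact (key.symm.map_twist τ.inv φQ).trans (lift.trans key)

end Comparison

section BarResolution

variable {K : Type} [CommRing K] {H : Type} [Group H]

instance isEquivalence_resFunctor (φ : H ≃* H) :
    (Rep.resFunctor φ.toMonoidHom : Rep.{0} K H ⥤ Rep.{0} K H).IsEquivalence where
  full := Rep.full_res _ φ.surjective
  essSurj.mem_essImage B := ⟨(Rep.resFunctor φ.symm.toMonoidHom).obj B, ⟨Rep.mkIso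
    { LinearEquiv.refl K B with
      isIntertwining' := fun g => LinearMap.ext fun x =>
        congrArg (fun h => B.ρ h x) (φ.symm_apply_apply g) }⟩⟩

/-- Restriction along a homomorphism, as an identification of trivial representations. -/
def trivialIsoRes (φ : H →* H) :
    Rep.trivial K H K ≅ (Rep.resFunctor φ).obj (Rep.trivial K H K) :=
  Iso.refl _

/-- The map induced by a homomorphism `φ` on the free modules of the bar resolution. -/
def barMap (φ : H →* H) (n : ℕ) :
    Rep.free K H (Fin n → H) ⟶ (Rep.resFunctor φ).obj (Rep.free K H (Fin n → H)) :=
  Rep.freeLift K H _ fun x => (Finsupp.single (fun i => φ (x i)) (MonoidAlgebra.single 1 1) :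
    (Fin n → H) →₀ MonoidAlgebra K H)

theorem barMap_single (φ : H →* H) (n : ℕ) (x : Fin n → H) (h : H) (r : K) :
    (barMap φ n).hom (Finsupp.single x (MonoidAlgebra.single h r)) =
      (Finsupp.single (fun i => φ (x i)) (MonoidAlgebra.single (φ h) r) :
        (Fin n → H) →₀ MonoidAlgebra K H) := by
  have hlift := Representation.freeLift_single_single
    ((Representation.free K H (Fin n → H)).comp φ) x h r fun x : Fin n → H =>
      (Finsupp.single (fun i => φ (x i)) (MonoidAlgebra.single 1 1) :
        (Fin n → H) →₀ MonoidAlgebra K H)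
  have hφ := Representation.free_single_single (φ h) (1 : H) (fun i => φ (x i)) (1 : K)
  refine hlift.trans ((congrArg (r • ·) hφ).trans ?_)
  rw [mul_one, Finsupp.smul_single, MonoidAlgebra.smul_single, smul_eq_mul, mul_one]

theorem barMap_comp_d (φ : H →* H) (n : ℕ) :
    barMap φ (n + 1) ≫ (Rep.resFunctor φ).map (Rep.barComplex.d K H n) =
      Rep.barComplex.d K H n ≫ barMap φ n := by
  refine Rep.free_ext _ _ _ _ _ fun x => ?_
  change (Rep.barComplex.d K H n).hom ((barMap φ (n + 1)).hom _) =
    (barMap φ n).hom ((Rep.barComplex.d K H n).hom _)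
  rw [barMap_single, map_one, Rep.barComplex.d_single, Rep.barComplex.d_single, map_add, map_sum,
    barMap_single]
  refine congrArg _ (Finset.sum_congr rfl fun j _ => ?_)
  rw [barMap_single, map_one, ← comp_contractNth φ j x]

/-- The chain map induced by a homomorphism on the bar resolution. -/
def barComplexMap (φ : H →* H) :
    Rep.barComplex K H ⟶ ((Rep.resFunctor φ).mapHomologicalComplex _).obj (Rep.barComplex K H) where
  f n := barMap φ n
  comm' i j hij := by
    obtain rfl : j + 1 = i := hij
    rw [Functor.mapHomologicalComplex_obj_d, Rep.barComplex.d_def]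
    exact barMap_comp_d φ j

theorem twist_barMap_zero (φ : H →* H) (f : Rep.free K H (Fin 0 → H) ⟶ Rep.trivial K H K) :
    twist (trivialIsoRes φ).inv (barMap φ 0) f = f := by
  refine Rep.free_ext _ _ _ _ _ fun x => ?_
  change f.hom ((barMap φ 0).hom _) = f.hom _
  rw [barMap_single, map_one]
  exact congrArg (fun y : Fin 0 → H => f.hom (Finsupp.single y (MonoidAlgebra.single 1 1)))
    (Subsingleton.elim _ _)

end BarResolution

section Cochains

variable {K : Type} [CommRing K] {H : Type} [Group H]

/-- Inhomogeneous cochains are the morphisms from the bar resolution to the coefficients. -/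
abbrev barCochainEquiv (n : ℕ) :
    (Rep.free K H (Fin n → H) ⟶ Rep.trivial K H K) ≃ₗ[K] ((Fin n → H) → K) :=
  Rep.freeLiftLEquiv K H (Fin n → H) (Rep.trivial K H K)

theorem d_barCochainEquiv (n : ℕ) (f : Rep.free K H (Fin n → H) ⟶ Rep.trivial K H K) :
    (inhomogeneousCochains.d (Rep.trivial K H K) n).hom (barCochainEquiv n f) =
      barCochainEquiv (n + 1) (Rep.barComplex.d K H n ≫ f) := by
  have hd := inhomogeneousCochains.d_eq (Rep.trivial K H K) n
  refine (congrArg (fun u => u.hom (barCochainEquiv n f)) hd).trans ?_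
  change barCochainEquiv (n + 1) ((Rep.barComplex K H).d (n + 1) n ≫
    ((barCochainEquiv n).symm (barCochainEquiv n f))) = _
  rw [LinearEquiv.symm_apply_apply, Rep.barComplex.d_def]

theorem cochainPrecomp_barCochainEquiv (φ : H →* H) (n : ℕ)
    (f : Rep.free K H (Fin n → H) ⟶ Rep.trivial K H K) :
    cochainPrecomp K φ n (barCochainEquiv n f) =
      barCochainEquiv n (twist (trivialIsoRes φ).inv (barMap φ n) f) := by
  funext x
  change _ = f.hom ((barMap φ n).hom (Finsupp.single x (MonoidAlgebra.single 1 1)))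
  rw [barMap_single, map_one]
  rfl

theorem exists_d_eq_of_cohomologous {s : ℕ} {f g : (Rep.barComplex K H).X s ⟶ Rep.trivial K H K}
    (h : Cohomologous f g) : ∃ i y,
      ((inhomogeneousCochains (Rep.trivial K H K)).d i s).hom y =
        barCochainEquiv s f - barCochainEquiv s g := by
  obtain ⟨c, rfl⟩ := h
  rw [← map_sub, add_sub_cancel_left]
  cases s with
  | zero =>
    have h₀ : (Rep.barComplex K H).d 0 ((ComplexShape.down ℕ).next 0) = 0 :=
      HomologicalComplex.shape _ _ _ (by simp)
    rw [h₀, Limits.zero_comp, map_zero]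
    exact ⟨0, 0, map_zero _⟩
  | succ s =>
    have hs : (ComplexShape.down ℕ).next (s + 1) = s := ChainComplex.next_nat_succ s
    generalize (ComplexShape.down ℕ).next (s + 1) = j at c hs
    subst hs
    refine ⟨j, barCochainEquiv j c, ?_⟩
    rw [inhomogeneousCochains.d_def, Rep.barComplex.d_def]
    exact d_barCochainEquiv j c

theorem homologyMap_eq_of_forall_exists {C D : CochainComplex (ModuleCat K) ℕ} {g h : C ⟶ D} {s : ℕ}
    (hgh : ∀ z, (C.d s (s + 1)).hom z = 0 →
      ∃ i y, (D.d i s).hom y = (g.f s).hom z - (h.f s).hom z) :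
    HomologicalComplex.homologyMap g s = HomologicalComplex.homologyMap h s := by
  rw [← cancel_epi (C.homologyπ s), HomologicalComplex.homologyπ_naturality,
    HomologicalComplex.homologyπ_naturality]
  refine ModuleCat.hom_ext (LinearMap.ext fun x => ?_)
  obtain ⟨i, y, hy⟩ := hgh ((C.iCycles s).hom x)
    (congrArg (fun u => u.hom x) (C.iCycles_d s (s + 1)))
  have hx : (HomologicalComplex.cyclesMap g s).hom x - (HomologicalComplex.cyclesMap h s).hom x =
      (D.toCycles i s).hom y := by
    apply (ModuleCat.mono_iff_injective (D.iCycles s)).1 inferInstance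
    have hg := congrArg (fun u => u.hom x) (HomologicalComplex.cyclesMap_i g s)
    have hh := congrArg (fun u => u.hom x) (HomologicalComplex.cyclesMap_i h s)
    have hd := congrArg (fun u => u.hom y) (D.toCycles_i i s)
    exact (map_sub _ _ _).trans ((congrArg₂ (· - ·) hg hh).trans (hy.symm.trans hd.symm))
  have hπ := congrArg (D.homologyπ s).hom hx
  rw [map_sub] at hπ
  exact sub_eq_zero.1 (hπ.trans (congrArg (fun u => u.hom y) (D.toCycles_comp_homologyπ i s)))

theorem cohomologyInducedMap_eq_id {P : ProjectiveResolution (Rep.trivial K H K)} {φ : H ≃* H}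
    {Φ : P.complex ⟶ ((Rep.resFunctor φ.toMonoidHom).mapHomologicalComplex _).obj P.complex}
    (hΦ : ∀ n (f : P.complex.X n ⟶ Rep.trivial K H K),
      twist (trivialIsoRes φ.toMonoidHom).inv (Φ.f n) f = f) (s : ℕ) :
    cohomologyInducedMap K φ.toMonoidHom s = 𝟙 _ := by
  refine (homologyMap_eq_of_forall_exists (h := 𝟙 _) fun z hz => ?_).trans
    (HomologicalComplex.homologyMap_id _ _)
  obtain ⟨f, rfl⟩ := (barCochainEquiv s).surjective z
  rw [inhomogeneousCochains.d_def, d_barCochainEquiv] at hz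
  have hf : Rep.barComplex.d K H s ≫ f = 0 := (barCochainEquiv (s + 1)).map_eq_zero_iff.1 hz
  have hB := cohomologous_twist_of_forall_twist_eq (Q := Rep.barResolution K H)
    (φQ := barComplexMap φ.toMonoidHom) (twist_barMap_zero _ _) hΦ
    (f := f) ((congrArg (· ≫ f) (Rep.barComplex.d_def ..)).trans hf)
  obtain ⟨i, y, hy⟩ := exists_d_eq_of_cohomologous hB
  exact ⟨i, y, hy.trans (congrArg (· - _) (cochainPrecomp_barCochainEquiv _ s f).symm)⟩

end Cochains

section SemilinearChainMap

open MonoidAlgebra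

variable {K : Type} [CommRing K] {H : Type} [Group H] {φ : H ≃* H} {X : ℕ → Type}
  [∀ n, AddCommGroup (X n)] [∀ n, Module K (X n)] [∀ n, Module K[H] (X n)]
  [∀ n, IsScalarTower K K[H] (X n)] {d : ∀ n, X (n + 1) →ₗ[K[H]] X n}

/-- Semilinear maps over an automorphism `φ` that commute with the differentials, as a chain map to
the restriction along `φ`. -/
def complexOfModulesToRes (hd : ∀ n, d n ∘ₗ d (n + 1) = 0)
    (ψ : ∀ n, X n →ₛₗ[mapDomainRingHom K φ.toMonoidHom] X n)
    (hψ : ∀ n z, d n (ψ (n + 1) z) = ψ n (d n z)) :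
    complexOfModules hd ⟶
      ((Rep.resFunctor φ.toMonoidHom).mapHomologicalComplex _).obj (complexOfModules hd) where
  f n := repOfModuleToRes (ψ n)
  comm' i j hij := by
    obtain rfl : j + 1 = i := hij
    rw [Functor.mapHomologicalComplex_obj_d, complexOfModules_d]
    exact Rep.hom_ext (Representation.IntertwiningMap.ext (LinearMap.ext (hψ j)))

theorem cohomologyInducedMap_eq_id_of_semilinear [∀ n, Module.Projective K[H] (X n)]
    {ε : X 0 →ₛₗ[(augmentation K H).toRingHom] K} (hd : ∀ n, Function.Exact (d (n + 1)) (d n))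
    (hdε : Function.Exact (d 0) ε) (hε : Function.Surjective ε)
    {ψ : ∀ n, X n →ₛₗ[mapDomainRingHom K φ.toMonoidHom] X n}
    (hψ : ∀ n z, d n (ψ (n + 1) z) = ψ n (d n z))
    (hf : ∀ n (f : repOfModule K (X n) ⟶ Rep.trivial K H K) z, f.hom (ψ n z) = f.hom z) (s : ℕ) :
    cohomologyInducedMap K φ.toMonoidHom s = 𝟙 _ :=
  cohomologyInducedMap_eq_id (P := resolutionOfModules hd hdε hε)
    (Φ := complexOfModulesToRes (fun n => (hd n).linearMap_comp_eq_zero) ψ hψ)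
    (fun n f => Rep.hom_ext (Representation.IntertwiningMap.ext (LinearMap.ext (hf n f)))) s

end SemilinearChainMap

section ProductResolution

open MonoidAlgebra BiperiodicComplex
open Finset.HasAntidiagonal (antidiagonal)

theorem repOfModule_hom_eq_of_augmentation_eq {K : Type} [CommRing K] {H : Type} [Group H]
    {ι : Type} [Finite ι] (f : repOfModule K (ι → K[H]) ⟶ Rep.trivial K H K) {y z : ι → K[H]}
    (h : ∀ x, augmentation K H (y x) = augmentation K H (z x)) : f.hom y = f.hom z := by
  classical
  have := Fintype.ofFinite ι
  have expand (z : ι → K[H]) :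
      f.hom z = ∑ x, augmentation K H (z x) * f.hom (Pi.single x (1 : K[H])) := by
    conv_lhs => rw [pi_eq_sum_univ' z, map_sum]
    exact Finset.sum_congr rfl fun x _ => repOfModule_hom_trivial_smul f _ _
  rw [expand y, expand z]
  simp only [h]

theorem augmentation_mapDomainRingHom {K : Type} [CommRing K] {H : Type} [Group H] (φ : H →* H)
    (x : K[H]) : augmentation K H (mapDomainRingHom K φ x) = augmentation K H x := by
  induction x using MonoidAlgebra.induction_linear with
  | zero => simp only [map_zero]
  | add x y hx hy => simp only [map_add, hx, hy]
  | single x r => simp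

variable (K : Type) [CommRing K] {M C D : Type} [CommGroup M] [CommGroup C] [CommGroup D]
  (f : M ≃* C × D) (g : C) (h : D)

/-- The differential of the tensor product of the periodic resolutions of two cyclic groups
`C = ⟨g⟩` and `D = ⟨h⟩`, over the group algebra of a group `M` identified with `C × D`. -/
abbrev productDifferential (n : ℕ) :
    (antidiagonal (n + 1) → K[M]) →ₗ[K[M]] (antidiagonal n → K[M]) :=
  differential (of K M (f.symm (g, 1)) - 1)
    (∑ i ∈ Finset.range (orderOf g), of K M (f.symm (g, 1)) ^ i)
    (of K M (f.symm (1, h)) - 1)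
    (∑ i ∈ Finset.range (orderOf h), of K M (f.symm (1, h)) ^ i) n

/-- The augmentation of the tensor product of two periodic resolutions. -/
def productAugmentation (K : Type) [CommRing K] (M : Type) [CommGroup M] :
    (antidiagonal 0 → K[M]) →ₛₗ[(augmentation K M).toRingHom] K where
  toFun z := augmentation K M (z ⟨(0, 0), by simp⟩)
  map_add' y z := map_add _ _ _
  map_smul' r z := map_mul _ _ _

theorem productAugmentation_surjective : Function.Surjective (productAugmentation K M) := fun r =>
  let ⟨x, hx⟩ := augmentation_surjective (C := M) r
  ⟨fun _ => x, hx⟩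

variable {K f g h} [Finite C] [Finite D]

theorem exact_productDifferential (hg : ∀ x, x ∈ Subgroup.zpowers g)
    (hh : ∀ x, x ∈ Subgroup.zpowers h) (n : ℕ) :
    Function.Exact (productDifferential K f g h (n + 1)) (productDifferential K f g h n) := by
  have hab := isExactPair_left (K := K) (f := f) hg
  have hcd : (of K M (f.symm (1, h)) - 1) *
      ∑ i ∈ Finset.range (orderOf h), of K M (f.symm (1, h)) ^ i = 0 := by
    rw [mul_geom_sum, ← map_pow, ← map_pow, Prod.pow_mk, one_pow, pow_orderOf_eq_one,
      ← Prod.one_eq_mk, map_one, map_one, sub_self]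
  refine fun z => ⟨fun hz => exists_differential_eq (sndMap_surjective K f)
    (sndMap_eq_zero_iff_dvd hg) hab hcd (isExactPair_right hh) hz, ?_⟩
  rintro ⟨y, rfl⟩
  exact LinearMap.congr_fun (differential_comp_differential hab.mul_eq_zero hcd n) y

theorem exact_productDifferential_productAugmentation (hg : ∀ x, x ∈ Subgroup.zpowers g)
    (hh : ∀ x, x ∈ Subgroup.zpowers h) :
    Function.Exact (productDifferential K f g h 0) (productAugmentation K M) := by
  intro z
  constructor
  · intro hz
    obtain ⟨y, hy⟩ := exists_differential_zero_eq (b := ∑ i ∈ Finset.range (orderOf g), _)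
      (d := ∑ i ∈ Finset.range (orderOf h), _) (mem_span_of_augmentation_eq_zero (f := f) hg hh hz)
    refine ⟨y, hy.trans (funext fun ⟨⟨i, j⟩, hij⟩ => ?_)⟩
    obtain ⟨rfl, rfl⟩ : i = 0 ∧ j = 0 := by simpa using hij
    rfl
  · rintro ⟨y, rfl⟩
    change augmentation K M (differential _ _ _ _ 0 y _) = 0
    rw [differential_apply 0 y _ (by simp) (by simp)]
    simp [alternating_one]

theorem augmentation_semilinearMap {φ : M →* M} {w e : K[M]} (hw : augmentation K M w = 0)
    (he : augmentation K M e = 0) (n : ℕ) (z : antidiagonal n → K[M]) (x : antidiagonal n) :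
    augmentation K M (semilinearMap w e (mapDomainRingHom K φ) n z x) =
      augmentation K M (z x) := by
  obtain ⟨⟨i, _ | j⟩, hij⟩ := x
  · rw [semilinearMap_apply_zero, augmentation_mapDomainRingHom]
  · have hκ : augmentation K M (alternating 0 (alternating e w i) j) = 0 := by
      rw [map_alternating, map_alternating, map_zero, hw, he, alternating, alternating, ite_self,
        ite_self]
    rw [semilinearMap_apply_succ _ _ _ _ _ _ (by simp at hij ⊢; omega), map_add, map_mul, hκ,
      zero_mul, add_zero, augmentation_mapDomainRingHom]

theorem cohomologyInducedMap_eq_id_of_transvection {p : ℕ} (hp : (p : K) = 0)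
    (hg : ∀ x, x ∈ Subgroup.zpowers g) (hh : ∀ x, x ∈ Subgroup.zpowers h)
    (hgh : h ^ orderOf g = 1) {φ : M ≃* M} (hφg : φ (f.symm (g, 1)) = f.symm (g, h ^ p))
    (hφh : φ (f.symm (1, h)) = f.symm (1, h)) (s : ℕ) :
    cohomologyInducedMap K φ.toMonoidHom s = 𝟙 _ := by
  let x := f.symm (g, 1)
  let y := f.symm (1, h)
  let Φ := mapDomainRingHom K φ.toMonoidHom
  have hΦ (m : M) : Φ (of K M m) = of K M (φ m) := by simp [Φ]
  have hΦx : Φ (of K M x) = of K M x * of K M y ^ p := by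
    rw [hΦ, hφg, ← map_pow, ← map_mul, ← map_pow, ← map_mul, Prod.pow_mk, Prod.mk_mul_mk, one_pow,
      mul_one, one_mul]
  have hΦy : Φ (of K M y) = of K M y := by rw [hΦ, hφh]
  have hy : of K M y ^ orderOf g = 1 := by
    rw [← map_pow, ← map_pow, Prod.pow_mk, one_pow, hgh, ← Prod.one_eq_mk, map_one, map_one]
  have hpM : (p : K[M]) = 0 := by rw [← map_natCast (algebraMap K K[M]), hp, map_zero]
  obtain ⟨w, e, hw, he, hwe, hαw, hαe⟩ := exists_correction (augmentation K M : K[M] →+* K)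
    (g := of K M x) hpM hy (by simp) (by simp)
  have hΦsum : Φ (∑ i ∈ Finset.range (orderOf g), of K M x ^ i) =
      ∑ i ∈ Finset.range (orderOf g), (of K M x * of K M y ^ p) ^ i := by
    simp only [map_sum, map_pow, hΦx]
  refine cohomologyInducedMap_eq_id_of_semilinear (exact_productDifferential (f := f) hg hh)
    (exact_productDifferential_productAugmentation hg hh) (productAugmentation_surjective K)
    (ψ := semilinearMap w e Φ)
    (differential_comp_semilinearMap ?_ (hΦsum.trans he) ?_ ?_ ((congrArg (w * ·) hΦsum).trans hwe))
    (fun n f z => repOfModule_hom_eq_of_augmentation_eq f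
      (augmentation_semilinearMap hαw hαe n z)) s
  · rw [map_sub, map_one, hΦx, hw]
  · rw [map_sub, map_one, hΦy]
  · simp only [map_sum, map_pow, y, hΦy]

end ProductResolution

section Functoriality

variable {K : Type} [CommRing K] {H : Type} [Group H]

theorem cohomologyInducedMap_mul (α β : Monoid.End H) (s : ℕ) :
    cohomologyInducedMap K (α * β : Monoid.End H) s =
      cohomologyInducedMap K α s ≫ cohomologyInducedMap K β s :=
  HomologicalComplex.homologyMap_comp (cochainsMap K α) (cochainsMap K β) s

theorem sum_range_cohomologyInducedMap_pow_eq_zero {α : Monoid.End H} {p m s : ℕ}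
    (hα : cohomologyInducedMap K (α ^ p : Monoid.End H) s = 𝟙 _) (hm : (m : K) = 0) :
    ∑ i ∈ Finset.range (p * m), cohomologyInducedMap K (α ^ i : Monoid.End H) s = 0 := by
  have periodic : Function.Periodic
      (fun i : ℕ => cohomologyInducedMap K (α ^ i : Monoid.End H) s) p := fun i => by
    dsimp only
    rw [pow_add, cohomologyInducedMap_mul, hα, Category.comp_id]
  rw [mul_comm, sum_range_mul_of_periodic periodic, ← Nat.cast_smul_eq_nsmul K, hm, zero_smul]

end Functoriality

section Sigma

theorem sigmaM_pow_apply (q i : ℕ) (a b : ZMod q) :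
    (sigmaM q ^ i : Monoid.End _) (Multiplicative.ofAdd (a, b)) =
      Multiplicative.ofAdd (a, i * a + b) := by
  induction i generalizing b with
  | zero => simp
  | succ i ih =>
    rw [pow_succ]
    refine (ih (a + b)).trans ?_
    rw [Nat.cast_succ, add_one_mul, add_assoc]

theorem sigmaM_pow_self (q : ℕ) : (sigmaM q ^ q : Monoid.End _) = 1 :=
  MonoidHom.ext fun x => (sigmaM_pow_apply q q x.toAdd.1 x.toAdd.2).trans <| by
    rw [ZMod.natCast_self, zero_mul, zero_add]
    rfl

theorem cohomologyInducedMap_sigmaM_pow (q p : ℕ) [NeZero q] (K : Type) [CommRing K]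
    (hp : (p : K) = 0) (s : ℕ) : cohomologyInducedMap K (sigmaM q ^ p : Monoid.End _) s = 𝟙 _ := by
  let g := Multiplicative.ofAdd (1 : ZMod q)
  have hg (x : Multiplicative (ZMod q)) : x ∈ Subgroup.zpowers g :=
    ⟨x.toAdd.val, congrArg Multiplicative.ofAdd <|
      (by simp : (x.toAdd.val : ℤ) • (1 : ZMod q) = x.toAdd)⟩
  let σ : Monoid.End (Multiplicative (ZMod q × ZMod q)) := sigmaM q ^ p
  have hσ : σ ^ q = 1 := by rw [← pow_mul', pow_mul, sigmaM_pow_self, one_pow]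
  refine cohomologyInducedMap_eq_id_of_transvection (f := MulEquiv.prodMultiplicative ..)
    (φ := MonoidHom.toMulEquiv σ (σ ^ (q - 1)) ((pow_sub_one_mul (NeZero.ne q) σ).trans hσ)
      ((mul_pow_sub_one (NeZero.ne q) σ).trans hσ)) hp hg hg (pow_orderOf_eq_one g) ?_ ?_ s
  · have hb : (p : ZMod q) * 1 + 0 = (g ^ p).toAdd := by simp [g]
    exact (sigmaM_pow_apply q p 1 0).trans (congrArg (fun b => Multiplicative.ofAdd (1, b)) hb)
  · have hb : (p : ZMod q) * 0 + 1 = 1 := by simp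
    exact (sigmaM_pow_apply q p 0 1).trans (congrArg (fun b => Multiplicative.ofAdd (0, b)) hb)

end Sigma

theorem stmt2_general (q p m : ℕ) [NeZero q] (K : Type) [CommRing K] (hp : (p : K) = 0)
    (hm : (m : K) = 0) (s : ℕ) :
    cohomologyInducedMap K (sigmaM q ^ p : Monoid.End _) s =
      𝟙 (groupCohomology (Rep.trivial K (Multiplicative (ZMod q × ZMod q)) K) s) ∧
    ∑ i ∈ Finset.range (p * m), cohomologyInducedMap K (sigmaM q ^ i : Monoid.End _) s = 0 :=
  have h := cohomologyInducedMap_sigmaM_pow q p K hp s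
  ⟨h, sum_range_cohomologyInducedMap_pow_eq_zero h hm⟩

/-- for an odd prime `p`, `n ≥ 2`, and `K` a field of characteristic `p`, with
`M = ZMod p^n × ZMod p^n` and `σ(i,j) = (i, i+j)`:  (a) the endomorphism of `H^s(M; K)`
induced by `σ^p` is the identity, and (b) `∑_{i=0}^{p^n − 1}` (endomorphism induced by
`σ^i`) is the zero map. -/
theorem stmt2 (p n : ℕ) (hp : p.Prime) (hodd : Odd p) (hn : 2 ≤ n)
    (K : Type) [Field K] [CharP K p] (s : ℕ) :
    cohomologyInducedMap K ((sigmaM (p ^ n)) ^ p : Monoid.End _) s =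
      𝟙 (groupCohomology (Rep.trivial K (Multiplicative (ZMod (p ^ n) × ZMod (p ^ n))) K) s) ∧
    ∑ i ∈ Finset.range (p ^ n),
      cohomologyInducedMap K ((sigmaM (p ^ n)) ^ i : Monoid.End _) s = 0 := by
  have : NeZero (p ^ n) := ⟨pow_ne_zero n hp.ne_zero⟩
  have h := stmt2_general (p ^ n) p (p ^ (n - 1)) K (CharP.cast_eq_zero K p)
    (by rw [Nat.cast_pow, CharP.cast_eq_zero, zero_pow (by omega)]) s
  rwa [mul_pow_sub_one (by omega)] at h
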